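/- arXiv:1610.02680 — 3 statements merged into one kernel-verified Lean document; each statement's English description precedes it below -/
import Mathlib

section
/- Let A > 0 and define E1(x) = ∫_x^∞ e^{−z}/z dz for x > 0, and g(R) = e^{1/A}·E1(1/A) − e^{1/R}·E1(1/R) for R > 0. Then g is twice differentiable on (0,∞), satisfies the ordinary differential equation (2R + 1)·g′(R) + R²·g″(R) = −1 for every R > 0, and g(A) = 0. -/
open MeasureTheory Real Set

/-- The exponential integral `E1 x = ∫_x^∞ e^{-z}/z dz`. -/
noncomputable def E1 (x : ℝ) : ℝ := ∫ z in Set.Ioi x, Real.exp (-z) / z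

theorem integrableOn_E1 (c : ℝ) (hc : 0 < c) :
    IntegrableOn (fun z : ℝ => Real.exp (-z) / z) (Set.Ioi c) := by
  have h := (integrableOn_exp_neg_Ioi c).const_mul (1 / c)
  refine Integrable.mono' h (by
    apply Measurable.aestronglyMeasurable
    fun_prop) ?_
  filter_upwards [ae_restrict_mem measurableSet_Ioi] with z hz
  have hz' : c < z := hz
  have hz0 : 0 < z := hc.trans hz'
  rw [Real.norm_of_nonneg (by positivity), div_eq_mul_one_div, mul_comm]
  gcongr

theorem hasDerivAt_E1 (x : ℝ) (hx : 0 < x) :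
    HasDerivAt E1 (-(Real.exp (-x) / x)) x := by
  have hc : 0 < x / 2 := by positivity
  have hint := integrableOn_E1 (x / 2) hc
  have hcont : ContinuousAt (fun z : ℝ => Real.exp (-z) / z) x := by
    apply ContinuousAt.div _ continuousAt_id hx.ne'
    fun_prop
  have hii : IntervalIntegrable (fun z : ℝ => Real.exp (-z) / z) volume (x / 2) x := by
    rw [intervalIntegrable_iff_integrableOn_Ioc_of_le (by linarith)]
    exact hint.mono_set Ioc_subset_Ioi_self
  have hm : StronglyMeasurable (fun z : ℝ => Real.exp (-z) / z) := by
    apply Measurable.stronglyMeasurable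
    fun_prop
  have h := (intervalIntegral.integral_hasDerivAt_right hii
    (hm.stronglyMeasurableAtFilter) hcont).const_sub (E1 (x / 2))
  refine h.congr_of_eventuallyEq ?_
  filter_upwards [lt_mem_nhds (show x / 2 < x by linarith)] with y hy
  have := intervalIntegral.integral_Ioi_sub_Ioi hint hy.le
  rw [← this]
  simp only [E1]
  ring

/-- For a threshold `A > 0`, the function
`g(R) = e^{1/A} E1(1/A) - e^{1/R} E1(1/R)` is twice differentiable on `(0,∞)`,
solves the ODE `(2R+1) g'(R) + R² g''(R) = -1` there, and satisfies `g(A) = 0`. -/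
theorem statement0 (A : ℝ) (hA : 0 < A) (g : ℝ → ℝ)
    (hg : ∀ R : ℝ, g R = Real.exp (1 / A) * E1 (1 / A) - Real.exp (1 / R) * E1 (1 / R)) :
    (∀ R : ℝ, 0 < R → DifferentiableAt ℝ g R) ∧
    (∀ R : ℝ, 0 < R → DifferentiableAt ℝ (deriv g) R) ∧
    (∀ R : ℝ, 0 < R → (2 * R + 1) * deriv g R + R ^ 2 * deriv (deriv g) R = -1) ∧
    g A = 0 := by
  have key : ∀ R : ℝ, 0 < R → HasDerivAt (fun R => Real.exp (1 / R) * E1 (1 / R))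
      (-(Real.exp (1 / R) * E1 (1 / R)) / R ^ 2 + 1 / R) R := by
    intro R hR
    have hinv : HasDerivAt (fun R : ℝ => 1 / R) (-(R ^ 2)⁻¹) R := by
      simpa [one_div] using hasDerivAt_inv hR.ne'
    have h1 := hinv.exp
    have h2 := (hasDerivAt_E1 (1 / R) (by positivity)).comp R hinv
    have h3 := h1.mul h2
    refine h3.congr_deriv ?_
    have he : Real.exp (-(1 / R)) = (Real.exp (1 / R))⁻¹ := Real.exp_neg _
    have hp := (Real.exp_pos (1 / R)).ne'
    simp only [Function.comp, he]
    generalize Real.exp (1 / R) = e at *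
    generalize E1 (1 / R) = w at *
    field_simp
  have hg1 : ∀ R : ℝ, 0 < R → HasDerivAt g
      (Real.exp (1 / R) * E1 (1 / R) / R ^ 2 - 1 / R) R := by
    intro R hR
    have h := (key R hR).const_sub (Real.exp (1 / A) * E1 (1 / A))
    rw [show g = _ from funext hg]
    refine h.congr_deriv ?_
    ring
  have hg2 : ∀ R : ℝ, 0 < R → HasDerivAt (deriv g)
      (((-(Real.exp (1 / R) * E1 (1 / R)) / R ^ 2 + 1 / R) * R ^ 2
        - (Real.exp (1 / R) * E1 (1 / R)) * (2 * R)) / (R ^ 2) ^ 2 + 1 / R ^ 2) R := by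
    intro R hR
    have hsq : HasDerivAt (fun R : ℝ => R ^ 2) (2 * R) R := by
      simpa using hasDerivAt_pow 2 R
    have hinv : HasDerivAt (fun R : ℝ => 1 / R) (-(R ^ 2)⁻¹) R := by
      simpa [one_div] using hasDerivAt_inv hR.ne'
    have h := ((key R hR).div hsq (by positivity)).sub hinv
    refine (h.congr_deriv ?_).congr_of_eventuallyEq ?_
    · rw [sub_neg_eq_add, one_div (R ^ 2)]
    · filter_upwards [lt_mem_nhds hR] with y hy
      exact (hg1 y hy).deriv
  refine ⟨fun R hR => (hg1 R hR).differentiableAt, fun R hR => (hg2 R hR).differentiableAt,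
    fun R hR => ?_, by rw [hg]; ring⟩
  rw [(hg1 R hR).deriv, (hg2 R hR).deriv]
  generalize Real.exp (1 / R) * E1 (1 / R) = w
  field_simp
  ring
end

section
/- Let 0 < r* < A, λ > 0, define E1(x) = ∫_x^∞ e^{−z}/z dz for x > 0, Ei(x) = γ_E + log x + ∫_0^x (e^t − 1)/t dt for x > 0 (γ_E the Euler–Mascheroni constant), and f_0(R) = (1 − e^{1/r*}·E1(1/r*))·(R − A) + ∫_{1/A}^{1/R} E1(x)·(e^x/x) dx. Suppose f : (0, A] → ℝ is bounded, continuous, twice continuously differentiable on (0, A), satisfies f(A) = 0, and solves −λ·f(R) + f′(R) + R²·f″(R) = e^{1/R}·E1(1/R) − e^{1/r*}·E1(1/r*) on (0, A). Then for every R ∈ (0, A]: f(R) = f_0(R) − λ·[ (Ei(1/A) − A·e^{1/A} − Ei(1/R) + R·e^{1/R})·∫_{1/A}^∞ f(1/z)·(−e^{−z}) dz − ∫_{1/A}^{1/R} f(1/z)·(1/z − e^{−z}·Ei(z)) dz + (Ei(1/R) − R·e^{1/R})·∫_{1/A}^{1/R} f(1/z)·(−e^{−z}) dz ]. -/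
open MeasureTheory Real Set

/-- The second exponential integral for positive arguments:
`Ei x = γ_E + log x + ∫_0^x (e^t - 1)/t dt`. -/
noncomputable def Ei (x : ℝ) : ℝ :=
  Real.eulerMascheroniConstant + Real.log x + ∫ t in (0:ℝ)..x, (Real.exp t - 1) / t

theorem ftc_pos (φ : ℝ → ℝ) (hφ : ContinuousOn φ (Ioi 0)) (a z : ℝ) (ha : 0 < a) (hz : 0 < z) :
    HasDerivAt (fun y => ∫ x in a..y, φ x) (φ z) z := by
  have hs : uIcc a z ⊆ Ioi 0 := fun x hx => lt_of_lt_of_le (lt_min ha hz) hx.1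
  apply intervalIntegral.integral_hasDerivAt_right
  · exact (hφ.mono hs).intervalIntegrable
  · exact hφ.stronglyMeasurableAtFilter isOpen_Ioi z hz
  · exact hφ.continuousAt (Ioi_mem_nhds hz)

theorem Ei_deriv (z : ℝ) (hz : 0 < z) : HasDerivAt Ei (Real.exp z / z) z := by
  have hc : Continuous (dslope Real.exp 0) := by
    rw [← continuousOn_univ, continuousOn_dslope Filter.univ_mem]
    exact ⟨Real.continuous_exp.continuousOn, Real.differentiableAt_exp⟩
  have he : Ei = fun x => Real.eulerMascheroniConstant + Real.log x +
      ∫ t in (0:ℝ)..x, dslope Real.exp 0 t := by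
    funext x
    unfold Ei
    congr 1
    apply intervalIntegral.integral_congr_ae
    have : ∀ᵐ t : ℝ, t ≠ 0 := by simp [ae_iff]
    filter_upwards [this] with t ht _
    rw [dslope_of_ne _ ht, slope_def_field]; simp
  rw [he]
  have h := ((hasDerivAt_const z Real.eulerMascheroniConstant).add (Real.hasDerivAt_log hz.ne')).add
    (intervalIntegral.integral_hasDerivAt_right (hc.intervalIntegrable 0 z)
     (hc.stronglyMeasurableAtFilter _ _) hc.continuousAt)
  refine HasDerivAt.congr_deriv h ?_
  rw [dslope_of_ne _ hz.ne', slope_def_field]; simp; field_simp; ring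

theorem E1_int (c : ℝ) (hc : 0 < c) : IntegrableOn (fun z => Real.exp (-z) / z) (Ioi c) := by
  have h := (integrableOn_exp_neg_Ioi c).const_mul (1/c)
  refine Integrable.mono' h ?_ ?_
  · refine ContinuousOn.aestronglyMeasurable ?_ measurableSet_Ioi
    intro x hx
    have : x ≠ 0 := (hc.trans hx).ne'
    exact ContinuousAt.continuousWithinAt (by fun_prop (disch := assumption))
  · filter_upwards [ae_restrict_mem measurableSet_Ioi] with x hx
    have hx' : c < x := hx
    have h0 := hc.trans hx'
    rw [Real.norm_of_nonneg (by positivity), div_eq_mul_one_div, mul_comm]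
    gcongr

theorem E1_bound (z : ℝ) (hz : 0 < z) : 0 ≤ E1 z ∧ z * E1 z ≤ Real.exp (-z) := by
  constructor
  · refine setIntegral_nonneg measurableSet_Ioi fun x hx => ?_
    have := hz.trans hx
    positivity
  · unfold E1
    rw [← integral_const_mul, ← integral_exp_neg_Ioi z]
    refine setIntegral_mono_on ((E1_int z hz).const_mul z) (integrableOn_exp_neg_Ioi z)
      measurableSet_Ioi fun x hx => ?_
    have hx' : z < x := hx
    have h0 := hz.trans hx'
    rw [mul_div_assoc', div_le_iff₀ h0, mul_comm]
    gcongr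

theorem E1_deriv (z : ℝ) (hz : 0 < z) : HasDerivAt E1 (-(Real.exp (-z) / z)) z := by
  have hc : ContinuousOn (fun z => Real.exp (-z) / z) (Ioi 0) := by
    intro x hx
    have : x ≠ 0 := (show 0 < x from hx).ne'
    exact ContinuousAt.continuousWithinAt (by fun_prop (disch := assumption))
  have h := (ftc_pos _ hc z z hz hz).const_sub (E1 z)
  refine h.congr_of_eventuallyEq ?_
  filter_upwards [Ioi_mem_nhds hz] with y hy
  have := intervalIntegral.integral_Ioi_sub_Ioi' (E1_int z hz) (E1_int y hy)
  unfold E1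
  linarith

theorem no_growth (g g' : ℝ → ℝ) (a C K L : ℝ) (ha : 0 < a) (hL : 0 < L)
    (hg : ∀ z, a < z → HasDerivAt g (g' z) z)
    (hb : ∀ z, a < z → |g z| ≤ C)
    (h : ∀ z, a < z → L * Real.exp z - K ≤ z ^ 2 * g' z) : False := by
  have hd : ∀ z, a < z → HasDerivAt (fun z => g z - L / 2 * z - K * z⁻¹)
      (g' z - L / 2 * 1 - K * (-(z ^ 2)⁻¹)) z := fun z hz =>
    ((hg z hz).sub ((hasDerivAt_id z).const_mul (L / 2))).sub
      ((hasDerivAt_inv (ha.trans hz).ne').const_mul K)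
  have hm : MonotoneOn (fun z => g z - L / 2 * z - K * z⁻¹) (Ioi a) := by
    apply monotoneOn_of_deriv_nonneg (convex_Ioi a)
    · exact fun z hz => (hd z hz).continuousAt.continuousWithinAt
    · rw [interior_Ioi]
      exact fun z hz => (hd z hz).differentiableAt.differentiableWithinAt
    · rw [interior_Ioi]
      intro z hz
      rw [(hd z hz).deriv]
      have h0 : 0 < z := ha.trans hz
      have h1 := h z hz
      have h2 := Real.quadratic_le_exp_of_nonneg h0.le
      have h3 : L / 2 * z ^ 2 - K ≤ z ^ 2 * g' z := by nlinarith
      have : g' z - L / 2 * 1 - K * (-(z ^ 2)⁻¹) = (z ^ 2 * g' z - (L / 2 * z ^ 2 - K)) / z ^ 2 := by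
        field_simp
        ring
      rw [this]
      exact div_nonneg (by linarith) (by positivity)
  have hb1 := hb (a + 1) (by linarith)
  set z0 := a + 1 with hz0
  set D := |K| * z0⁻¹ with hD
  have hD0 : 0 ≤ D := by positivity
  set N := (2 * C + 2 * D + 1) * (2 / L) with hN
  have hC : 0 ≤ C := (abs_nonneg _).trans hb1
  have hN0 : 0 ≤ N := by positivity
  have hle := hm (show z0 ∈ Ioi a by simp [hz0]) (show z0 + N ∈ Ioi a by simp [hz0]; linarith)
    (by linarith)
  have hb2 := hb (z0 + N) (by linarith)
  simp only at hle
  have e1 : L / 2 * N = 2 * C + 2 * D + 1 := by rw [hN]; field_simp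
  have k1 : K * z0⁻¹ ≤ D := by rw [hD]; gcongr; exact le_abs_self K
  have k2 : -D ≤ K * (z0 + N)⁻¹ := by
    have : |K| * (z0 + N)⁻¹ ≤ D := by
      rw [hD]; gcongr; linarith
    have h3 : -|K| * (z0 + N)⁻¹ ≤ K * (z0 + N)⁻¹ := by
      gcongr
      exact neg_abs_le K
    linarith
  have := abs_le.1 hb1
  have := abs_le.1 hb2
  nlinarith

/-- Equation (eq:flambda) of the paper: any bounded twice continuously
differentiable solution of `-λ f + f' + R² f'' = e^{1/R}E1(1/R) - e^{1/r*}E1(1/r*)`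
on `(0, A)` with `f(A) = 0` satisfies the explicit integral equation used for the
numerical computation of `f_λ`. -/
theorem statement10 (rstar A lam : ℝ) (hrstar : 0 < rstar) (hrA : rstar < A)
    (hlam : 0 < lam)
    (f0 : ℝ → ℝ)
    (hf0 : ∀ R : ℝ, f0 R =
      (1 - Real.exp (1 / rstar) * E1 (1 / rstar)) * (R - A) +
        ∫ x in (1 / A)..(1 / R), E1 x * (Real.exp x / x))
    (f : ℝ → ℝ)
    (hbdd : ∃ C : ℝ, ∀ x ∈ Set.Ioc (0:ℝ) A, |f x| ≤ C)
    (hcont : ContinuousOn f (Set.Ioc (0:ℝ) A))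
    (hf1 : ∀ x ∈ Set.Ioo (0:ℝ) A, DifferentiableAt ℝ f x)
    (hf1c : ContinuousOn (deriv f) (Set.Ioo (0:ℝ) A))
    (hf2 : ∀ x ∈ Set.Ioo (0:ℝ) A, DifferentiableAt ℝ (deriv f) x)
    (hf2c : ContinuousOn (deriv (deriv f)) (Set.Ioo (0:ℝ) A))
    (hfA : f A = 0)
    (hode : ∀ x ∈ Set.Ioo (0:ℝ) A,
      -(lam * f x) + deriv f x + x ^ 2 * deriv (deriv f) x =
        Real.exp (1 / x) * E1 (1 / x) - Real.exp (1 / rstar) * E1 (1 / rstar)) :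
    ∀ R ∈ Set.Ioc (0:ℝ) A,
      f R = f0 R - lam *
        ((Ei (1 / A) - A * Real.exp (1 / A) - Ei (1 / R) + R * Real.exp (1 / R)) *
            (∫ z in Set.Ioi (1 / A), f (1 / z) * (-Real.exp (-z))) -
          (∫ z in (1 / A)..(1 / R), f (1 / z) * (1 / z - Real.exp (-z) * Ei z)) +
          (Ei (1 / R) - R * Real.exp (1 / R)) *
            (∫ z in (1 / A)..(1 / R), f (1 / z) * (-Real.exp (-z)))) := by
  obtain ⟨C, hC⟩ := hbdd
  have hA : 0 < A := hrstar.trans hrA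
  set c := Real.exp (1 / rstar) * E1 (1 / rstar) with hc
  set a := 1 / A with ha
  have ha0 : 0 < a := by positivity
  have hmem : ∀ z, a ≤ z → 1 / z ∈ Ioc (0:ℝ) A := by
    intro z hz
    refine ⟨one_div_pos.2 (ha0.trans_le hz), ?_⟩
    rw [ha] at hz
    rw [one_div_le (ha0.trans_le hz) hA]; exact hz
  have hmem' : ∀ z, a < z → 1 / z ∈ Ioo (0:ℝ) A := by
    intro z hz
    refine ⟨one_div_pos.2 (ha0.trans hz), ?_⟩
    rw [ha] at hz
    rw [one_div_lt (ha0.trans hz) hA]; exact hz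
  obtain ⟨g, hg⟩ : ∃ g : ℝ → ℝ, g = fun z => f (1 / max a z) := ⟨_, rfl⟩
  have hge : ∀ z, a ≤ z → f (1 / z) = g z := by
    intro z hz; rw [hg]; simp only [max_eq_right hz]
  have hgc : Continuous g := by
    rw [hg]
    refine hcont.comp_continuous ?_ fun z => hmem _ (le_max_left _ _)
    refine Continuous.div continuous_const (by fun_prop) fun z => ?_
    exact (ha0.trans_le (le_max_left a z)).ne'
  have hgb : ∀ z, |g z| ≤ C := by
    intro z; rw [hg]; exact hC _ (hmem _ (le_max_left _ _))
  have hgd : ∀ z, a < z → HasDerivAt g (-deriv f (1 / z) / z ^ 2) z := by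
    intro z hz
    have h0 : z ≠ 0 := (ha0.trans hz).ne'
    have h1 := hasDerivAt_inv h0
    have h2 : HasDerivAt f (deriv f (1 / z)) (z⁻¹) := by
      rw [← one_div]; exact (hf1 _ (hmem' z hz)).hasDerivAt
    have h3 := h2.comp z h1
    refine (h3.congr_deriv (by ring)).congr_of_eventuallyEq ?_
    filter_upwards [Ioi_mem_nhds hz] with y hy
    rw [← hge y (le_of_lt hy), one_div]; rfl
  have hhd : ∀ z, a < z → HasDerivAt (fun z => deriv f (1 / z))
      (-deriv (deriv f) (1 / z) / z ^ 2) z := by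
    intro z hz
    have h0 : z ≠ 0 := (ha0.trans hz).ne'
    have h1 := hasDerivAt_inv h0
    have h2 : HasDerivAt (deriv f) (deriv (deriv f) (1 / z)) (z⁻¹) := by
      rw [← one_div]; exact (hf2 _ (hmem' z hz)).hasDerivAt
    have h3 := h2.comp z h1
    refine (h3.congr_deriv (by ring)).congr_of_eventuallyEq ?_
    filter_upwards with y
    rw [one_div]; rfl
  have hode' : ∀ z, a < z → -(lam * g z) + deriv f (1 / z) + deriv (deriv f) (1 / z) / z ^ 2
      = Real.exp z * E1 z - c := by
    intro z hz
    have := hode _ (hmem' z hz)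
    rw [one_div_one_div, hge z hz.le] at this
    rw [← this]; ring
  clear hode hcont hf1 hf1c hf2 hf2c
  have hexpd : ∀ z : ℝ, HasDerivAt (fun z => Real.exp (-z)) (-Real.exp (-z)) z := by
    intro z
    simpa using (hasDerivAt_neg z).exp
  obtain ⟨φ, hφ⟩ : ∃ φ : ℝ → ℝ, φ = fun z => g z * (-Real.exp (-z)) := ⟨_, rfl⟩
  have hφc : Continuous φ := by rw [hφ]; fun_prop
  have hφb : ∀ z, ‖φ z‖ ≤ C * Real.exp (-z) := by
    intro z
    rw [hφ]
    simp only [norm_mul, norm_neg, Real.norm_eq_abs, Real.abs_exp]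
    gcongr
    exact hgb z
  have hφi : ∀ z, IntegrableOn φ (Ioi z) := by
    intro z
    refine Integrable.mono' ((integrableOn_exp_neg_Ioi z).const_mul C)
      hφc.aestronglyMeasurable ?_
    filter_upwards with x using hφb x
  set I := ∫ z in Ioi a, φ z with hI
  obtain ⟨J, hJ⟩ : ∃ J : ℝ → ℝ, J = fun z => ∫ x in a..z, φ x := ⟨_, rfl⟩
  have hJd : ∀ z, HasDerivAt J (φ z) z := by
    intro z; rw [hJ]
    exact intervalIntegral.integral_hasDerivAt_right (hφc.intervalIntegrable _ _)
      (hφc.stronglyMeasurableAtFilter _ _) hφc.continuousAt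
  have hIJ : ∀ z, |I - J z| ≤ C * Real.exp (-z) := by
    intro z
    have h1 := intervalIntegral.integral_interval_add_Ioi (hφi a) (hφi z)
    have h2 : I - J z = ∫ x in Ioi z, φ x := by rw [hJ, hI, ← h1]; simp
    rw [h2, ← Real.norm_eq_abs]
    refine (norm_integral_le_integral_norm _).trans ?_
    rw [← integral_exp_neg_Ioi z, ← integral_const_mul]
    exact integral_mono (hφi z).norm ((integrableOn_exp_neg_Ioi z).const_mul C) hφb
  obtain ⟨B, hB⟩ : ∃ B : ℝ → ℝ, B = fun z => lam * (I - J z) - Real.exp (-z) + z * E1 z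
      + c * Real.exp (-z) := ⟨_, rfl⟩
  have hBd : ∀ z, 0 < z → HasDerivAt B (lam * g z * Real.exp (-z) + E1 z - c * Real.exp (-z)) z := by
    intro z hz
    have h := (((((hJd z).const_sub I).const_mul lam).sub (hexpd z)).add
      ((hasDerivAt_id z).mul (E1_deriv z hz))).add ((hexpd z).const_mul c)
    rw [hB]
    refine HasDerivAt.congr_deriv h ?_
    simp only [hφ, id]
    field_simp
    ring
  have hC0 : 0 ≤ C := (abs_nonneg _).trans (hgb 0)
  have hBb : ∀ z, 0 < z → |Real.exp z * B z| ≤ lam * C + 2 + |c| := by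
    intro z hz
    have h1 := abs_le.1 (hIJ z)
    have h2 := E1_bound z hz
    have h3 := mul_nonneg hz.le h2.1
    have hp := Real.exp_pos (-z)
    have h4 : |B z| ≤ (lam * C + 2 + |c|) * Real.exp (-z) := by
      have h5 := abs_mul c (Real.exp (-z))
      rw [Real.abs_exp] at h5
      have h6 := abs_le.1 h5.le
      rw [hB, abs_le]
      constructor <;> simp only <;> nlinarith
    rw [abs_mul, Real.abs_exp]
    calc Real.exp z * |B z| ≤ Real.exp z * ((lam * C + 2 + |c|) * Real.exp (-z)) := by gcongr
      _ = _ := by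
        rw [Real.exp_neg]; field_simp
  have hMd : ∀ z, a < z → HasDerivAt (fun z => Real.exp (-z) * (-deriv f (1 / z)) - B z) 0 z := by
    intro z hz
    have h := ((hexpd z).mul (hhd z hz).neg).sub (hBd z (ha0.trans hz))
    refine HasDerivAt.congr_deriv h ?_
    have h1 := hode' z hz
    have h2 : deriv f (1 / z) = Real.exp z * E1 z - c + lam * g z
      - deriv (deriv f) (1 / z) / z ^ 2 := by linarith
    simp only [Pi.neg_apply, h2]
    have h3 : Real.exp (-z) * Real.exp z = 1 := by rw [← Real.exp_add]; simp
    linear_combination E1 z * h3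
  obtain ⟨L, hL⟩ := IsOpen.exists_is_const_of_deriv_eq_zero (𝕜 := ℝ) (isOpen_Ioi (a := a))
    isPreconnected_Ioi (fun z hz => (hMd z hz).differentiableAt.differentiableWithinAt)
    (fun z hz => (hMd z hz).deriv)
  have hL' : ∀ z, a < z → -deriv f (1 / z) = L * Real.exp z + Real.exp z * B z := by
    intro z hz
    have h := hL z hz
    have h3 : Real.exp (-z) * Real.exp z = 1 := by rw [← Real.exp_add]; simp
    linear_combination Real.exp z * h + deriv f (1 / z) * h3
  have hL0 : L = 0 := by
    rcases lt_trichotomy L 0 with h | h | h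
    · exfalso
      refine no_growth (-g) _ a C (lam * C + 2 + |c|) (-L) ha0 (by linarith)
        (fun z hz => (hgd z hz).neg) (fun z _ => by simpa using hgb z) fun z hz => ?_
      have h0 := ha0.trans hz
      have := abs_le.1 (hBb z h0)
      rw [hL' z hz]
      field_simp
      linarith
    · exact h
    · exfalso
      refine no_growth g _ a C (lam * C + 2 + |c|) L ha0 h
        hgd (fun z _ => hgb z) fun z hz => ?_
      have h0 := ha0.trans hz
      have := abs_le.1 (hBb z h0)
      rw [hL' z hz]
      field_simp
      linarith
  have hEic : ContinuousOn Ei (Ioi 0) := fun z hz => (Ei_deriv z hz).continuousAt.continuousWithinAt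
  have hE1c : ContinuousOn E1 (Ioi 0) := fun z hz => (E1_deriv z hz).continuousAt.continuousWithinAt
  have hne : ∀ z ∈ Ioi (0:ℝ), z ≠ 0 := fun z hz => ne_of_gt hz
  have hc1 : ContinuousOn (fun x => E1 x * (Real.exp x / x)) (Ioi 0) :=
    hE1c.mul (Real.continuous_exp.continuousOn.div continuousOn_id hne)
  have hc2 : ContinuousOn (fun z => g z * (1 / z - Real.exp (-z) * Ei z)) (Ioi 0) :=
    hgc.continuousOn.mul ((continuousOn_const.div continuousOn_id hne).sub
      (ContinuousOn.mul (by fun_prop) hEic))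
  have hPd : ∀ z, 0 < z → HasDerivAt (fun z => Ei z - z⁻¹ * Real.exp z) (Real.exp z / z ^ 2) z := by
    intro z hz
    have h := (Ei_deriv z hz).sub ((hasDerivAt_inv hz.ne').mul (Real.hasDerivAt_exp z))
    refine HasDerivAt.congr_deriv h ?_
    field_simp
    ring
  obtain ⟨P, hP⟩ : ∃ P : ℝ → ℝ, P = fun z => Ei z - z⁻¹ * Real.exp z := ⟨_, rfl⟩
  rw [← hP] at hPd
  obtain ⟨K, hK⟩ : ∃ K : ℝ → ℝ, K = fun z => (1 - c) * (z⁻¹ - A) +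
      (∫ x in a..z, E1 x * (Real.exp x / x)) - lam * ((P a - P z) * I -
        (∫ x in a..z, g x * (1 / x - Real.exp (-x) * Ei x)) + P z * J z) := ⟨_, rfl⟩
  have hKd : ∀ z, 0 < z → HasDerivAt K (Real.exp z * B z / z ^ 2) z := by
    intro z hz
    have h := ((((hasDerivAt_inv hz.ne').sub_const A).const_mul (1 - c)).add
      (ftc_pos _ hc1 a z ha0 hz)).sub ((((((hPd z hz).const_sub (P a)).mul_const I).sub
        (ftc_pos _ hc2 a z ha0 hz)).add ((hPd z hz).mul (hJd z))).const_mul lam)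
    rw [hK]
    refine HasDerivAt.congr_deriv h ?_
    simp only [hφ, hB, hP]
    rw [Real.exp_neg]
    field_simp
    ring
  intro R hR
  have hR0 : 0 < R := hR.1
  have haR : a ≤ 1 / R := one_div_le_one_div_of_le hR0 hR.2
  have hWc : ContinuousOn (fun z => g z - K z) (Icc a (1 / R)) := fun z hz =>
    (hgc.continuousAt.sub (hKd z (ha0.trans_le hz.1)).continuousAt).continuousWithinAt
  have hWd : ∀ z, a < z → HasDerivAt (fun z => g z - K z) 0 z := by
    intro z hz
    refine HasDerivAt.congr_deriv ((hgd z hz).sub (hKd z (ha0.trans hz))) ?_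
    rw [hL' z hz, hL0]; ring
  have hWeq : g (1 / R) - K (1 / R) = g a - K a := by
    rcases haR.eq_or_lt with h | h
    · rw [h]
    · obtain ⟨x, hx, he⟩ := exists_hasDerivAt_eq_slope (fun z => g z - K z) (fun _ => 0) h hWc
        (fun z hz => hWd z hz.1)
      have h5 : 1 / R - a ≠ 0 := by linarith
      rw [eq_div_iff h5] at he
      linarith
  have hga : g a = 0 := by
    rw [← hge a le_rfl, ha, one_div_one_div, hfA]
  have hKa : K a = 0 := by
    rw [hK, hJ]
    simp [ha]
  have hfR : f R = K (1 / R) := by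
    have := hge (1 / R) haR
    rw [one_div_one_div] at this
    rw [this]; linarith
  have i1 : (∫ z in Ioi a, f (1 / z) * (-Real.exp (-z))) = I := by
    refine setIntegral_congr_fun measurableSet_Ioi fun z hz => ?_
    simp only [hφ, hge z (le_of_lt hz)]
  have i2 : (∫ z in a..(1 / R), f (1 / z) * (-Real.exp (-z))) = J (1 / R) := by
    rw [hJ]
    refine intervalIntegral.integral_congr fun z hz => ?_
    rw [uIcc_of_le haR] at hz
    simp only [hφ, hge z hz.1]
  have i3 : (∫ z in a..(1 / R), f (1 / z) * (1 / z - Real.exp (-z) * Ei z)) =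
      ∫ x in a..(1 / R), g x * (1 / x - Real.exp (-x) * Ei x) := by
    refine intervalIntegral.integral_congr fun z hz => ?_
    rw [uIcc_of_le haR] at hz
    simp only [hge z hz.1]
  rw [i1, i2, i3, hfR, hf0, hK, hP]
  have e1 : a⁻¹ = A := by rw [ha]; simp
  have e2 : (1 / R)⁻¹ = R := by simp
  simp only [e1, e2]
  ring
end

section
/- Let r > 0 be fixed and define E1(x) = ∫_x^∞ e^{−z}/z dz for x > 0. Then (1/γ)·∫_{1/(r+γ)}^{1/r} E1(x)·(e^x/x) dx → 0 as γ → ∞. Consequently, with f_0^{(γ)}(r) = −γ·(1 − e^{1/r}·E1(1/r)) + ∫_{1/(r+γ)}^{1/r} E1(x)·(e^x/x) dx, one has f_0^{(γ)}(r)/γ → −(1 − e^{1/r}·E1(1/r)) as γ → ∞. -/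
open MeasureTheory Real Set Filter

lemma E1_bound_aux (x : ℝ) (hx : 0 < x) :
    ‖E1 x‖ ≤ Real.Gamma (1/2) * x ^ (-(1/2) : ℝ) := by
  have hG := Real.GammaIntegral_convergent (s := 1/2) (by norm_num)
  have hsub : Ioi x ⊆ Ioi (0:ℝ) := Ioi_subset_Ioi hx.le
  have key : ‖E1 x‖ ≤ ∫ z in Ioi x,
      (Real.exp (-z) * z ^ ((1/2 : ℝ) - 1)) * x ^ (-(1/2) : ℝ) := by
    unfold E1
    refine norm_integral_le_of_norm_le ((hG.mono_set hsub).mul_const _) ?_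
    refine (ae_restrict_iff' measurableSet_Ioi).2 (Eventually.of_forall ?_)
    intro z hz
    have hz0 : 0 < z := hx.trans hz
    have h1 : z ^ (-(1/2) : ℝ) ≤ x ^ (-(1/2) : ℝ) :=
      Real.rpow_le_rpow_of_nonpos hx (le_of_lt hz) (by norm_num)
    have h2 : z⁻¹ = z ^ ((1/2 : ℝ) - 1) * z ^ (-(1/2) : ℝ) := by
      rw [← Real.rpow_add hz0, ← Real.rpow_neg_one]; norm_num
    rw [Real.norm_of_nonneg (by positivity), div_eq_mul_inv, h2, mul_assoc]
    gcongr
  refine key.trans ?_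
  rw [integral_mul_const, Real.Gamma_eq_integral (by norm_num)]
  refine mul_le_mul_of_nonneg_right ?_ (by positivity)
  refine setIntegral_mono_set hG ?_ hsub.eventuallyLE
  refine (ae_restrict_iff' measurableSet_Ioi).2 (Eventually.of_forall ?_)
  intro z hz
  have hz0 : 0 < z := hz
  simp only [Pi.zero_apply]
  positivity

lemma int_bound_aux (r γ : ℝ) (hr : 0 < r) (hγ : 0 < γ) :
    ‖∫ x in (1 / (r + γ))..(1 / r), E1 x * (Real.exp x / x)‖ ≤
      2 * (Real.Gamma (1/2) * Real.exp (1 / r)) * (r + γ) ^ (1/2 : ℝ) := by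
  have hab : 1 / (r + γ) ≤ 1 / r := one_div_le_one_div_of_le hr (by linarith)
  have ha : 0 < 1 / (r + γ) := by positivity
  have h0 : (0:ℝ) ∉ uIcc (1 / (r + γ)) (1 / r) := by
    rw [uIcc_of_le hab]; intro h; linarith [h.1]
  have hGp : 0 < Real.Gamma (1/2) := Real.Gamma_pos_of_pos (by norm_num)
  have hint : IntervalIntegrable (fun x : ℝ => x ^ (-(3/2) : ℝ)) volume
      (1 / (r + γ)) (1 / r) := intervalIntegral.intervalIntegrable_rpow (Or.inr h0)
  have key : ‖∫ x in (1 / (r + γ))..(1 / r), E1 x * (Real.exp x / x)‖ ≤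
      ∫ x in (1 / (r + γ))..(1 / r),
        (Real.Gamma (1/2) * Real.exp (1 / r)) * x ^ (-(3/2) : ℝ) := by
    refine intervalIntegral.norm_integral_le_of_norm_le hab
      (Eventually.of_forall ?_) (hint.const_mul _)
    intro x hx
    have hx0 : 0 < x := ha.trans hx.1
    have h1 := E1_bound_aux x hx0
    have h2 : x ^ (-(3/2) : ℝ) = x ^ (-(1/2) : ℝ) * x⁻¹ := by
      rw [← Real.rpow_neg_one, ← Real.rpow_add hx0]; norm_num
    have h3 : Real.exp x ≤ Real.exp (1 / r) := Real.exp_le_exp.2 hx.2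
    rw [norm_mul, Real.norm_of_nonneg (by positivity : 0 ≤ Real.exp x / x), h2]
    calc ‖E1 x‖ * (Real.exp x / x)
        ≤ (Real.Gamma (1/2) * x ^ (-(1/2) : ℝ)) * (Real.exp (1 / r) / x) := by gcongr
      _ = _ := by rw [div_eq_mul_inv]; ring
  refine key.trans ?_
  rw [intervalIntegral.integral_const_mul, integral_rpow (Or.inr ⟨by norm_num, h0⟩)]
  have e : (-(3/2) : ℝ) + 1 = -(1/2) := by norm_num
  have e2 : (1 / (r + γ)) ^ (-(1/2) : ℝ) = (r + γ) ^ (1/2 : ℝ) := by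
    rw [one_div, Real.inv_rpow (by positivity), ← Real.rpow_neg (by positivity), neg_neg]
  rw [e, e2]
  have h4 : 0 ≤ (1 / r) ^ (-(1/2) : ℝ) := by positivity
  have h5 : ((1 / r) ^ (-(1/2) : ℝ) - (r + γ) ^ (1/2 : ℝ)) / (-(1/2)) ≤
      2 * (r + γ) ^ (1/2 : ℝ) := by linarith
  calc _ ≤ (Real.Gamma (1/2) * Real.exp (1 / r)) * (2 * (r + γ) ^ (1/2 : ℝ)) := by gcongr
    _ = _ := by ring

/-- Asymptotics of the equation (eq:det-rstar-final) of the paper: for fixed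
`r > 0`, `(1/γ) ∫_{1/(r+γ)}^{1/r} E1(x) e^x/x dx → 0` as `γ → ∞`, and hence
`f_0^{(γ)}(r)/γ → -(1 - e^{1/r} E1(1/r))`. -/
theorem statement13 (r : ℝ) (hr : 0 < r) :
    Tendsto (fun γ : ℝ =>
        (1 / γ) * ∫ x in (1 / (r + γ))..(1 / r), E1 x * (Real.exp x / x))
      atTop (nhds 0) ∧
    Tendsto (fun γ : ℝ =>
        (-γ * (1 - Real.exp (1 / r) * E1 (1 / r)) +
          ∫ x in (1 / (r + γ))..(1 / r), E1 x * (Real.exp x / x)) / γ)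
      atTop (nhds (-(1 - Real.exp (1 / r) * E1 (1 / r)))) := by
  have hA : Tendsto (fun γ : ℝ =>
        (1 / γ) * ∫ x in (1 / (r + γ))..(1 / r), E1 x * (Real.exp x / x))
      atTop (nhds 0) := by
    have hlim : Tendsto (fun γ : ℝ => 4 * (Real.Gamma (1/2) * Real.exp (1 / r)) *
        (r + γ) ^ (-(1/2) : ℝ)) atTop (nhds 0) := by
      have := ((tendsto_rpow_neg_atTop (y := 1/2) (by norm_num)).comp
        (tendsto_atTop_add_const_left atTop r tendsto_id)).const_mul
          (4 * (Real.Gamma (1/2) * Real.exp (1 / r)))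
      simpa using this
    refine squeeze_zero_norm' ?_ hlim
    filter_upwards [eventually_ge_atTop r] with γ hγ
    have hγ0 : 0 < γ := hr.trans_le hγ
    have hs : 0 < r + γ := by linarith
    have hGp : 0 < Real.Gamma (1/2) := Real.Gamma_pos_of_pos (by norm_num)
    have h1 : 1 / γ ≤ 2 * (r + γ)⁻¹ := by
      rw [← div_eq_mul_inv, div_le_div_iff₀ hγ0 hs]; linarith
    have h2 : (r + γ) ^ (-(1/2) : ℝ) = (r + γ)⁻¹ * (r + γ) ^ (1/2 : ℝ) := by
      rw [← Real.rpow_neg_one, ← Real.rpow_add hs]; norm_num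
    rw [norm_mul, Real.norm_of_nonneg (by positivity : 0 ≤ 1 / γ), h2]
    calc _ ≤ (2 * (r + γ)⁻¹) *
          (2 * (Real.Gamma (1/2) * Real.exp (1 / r)) * (r + γ) ^ (1/2 : ℝ)) :=
          mul_le_mul h1 (int_bound_aux r γ hr hγ0) (norm_nonneg _) (by positivity)
      _ = _ := by ring
  refine ⟨hA, ?_⟩
  have hB := hA.const_add (-(1 - Real.exp (1 / r) * E1 (1 / r)))
  rw [add_zero] at hB
  refine hB.congr' ?_
  filter_upwards [eventually_gt_atTop 0] with γ hγ
  rw [add_div, neg_mul, neg_div, mul_div_cancel_left₀ _ hγ.ne', one_div_mul_eq_div]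
end
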